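/- Let V be a finite elementary abelian 3-group on which a nonabelian finite group H acts faithfully and irreducibly, and suppose the semidirect product G = V ⋊ H has odd order. Let k be a subfield of ℂ containing the primitive 3rd roots of unity. Then acd_{k,3'}(G) ≥ 81/17. -/

import Mathlib

/-!
Write `Irr_{k,3'}(G)` for the characters being averaged, where `G = V ⋊ H`. Degrees of irreducible
characters divide the odd number `|G|` (`degree_dvd_card`), and multiples of `3` are excluded, so
every such degree is `1` or at least `5 > 81/17`. Only the linear characters pull the average down.
By irreducibility and faithfulness they are trivial on `V` (`linear_trivial_on`), hence there are at
most `ℓ` of them, where `ℓ` is the number of `k`-valued linear characters `μ` of `H`.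

They are compensated by explicit characters of larger degree. For a character `l : V → ℂˣ` with
`H`-orbit `O` and a linear character `μ` of `H`, the group `G` acts monomially on `ℂ^O` by
`((v, h) f)(η) = μ(h) η(v) f(h⁻¹ η)` (`monoRep`). This representation, which is
`Ind (l extended to V ⋊ H_l) ⊗ μ`, is irreducible by Burnside's orbit counting lemma
(`monoFD_simple`), has degree `m = |H : H_l|`, and is `k`-valued if `μ` is, since `V` has exponent
`3` and `k` contains the cube roots of unity. A Sylow `3`-subgroup of `H` fixes some `l ≠ 1`, and
for this `l` the degree `m` is prime to `3` (`exists_good_char`). The character determines the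
restriction of `μ` to `H_l`, and at most `t = |H : H' H_l|` linear characters of `H` are trivial on
`H_l`, so `l` contributes at least `ℓ / t` characters. As `|H|` is odd, `l⁻¹` lies in a different
orbit and contributes as many again. In total at least `2ℓ / t` characters of degree `m` occur,
and the claim reduces to `17 m ≥ 81 + 32 t`.

For this inequality (`index_bound`) put `m = s t` with `s = |H' H_l : H_l|`. A normal subgroup of `H`
contained in `H_l` is trivial (`eq_bot_of_le_stabilizer`). Hence `H'` is not contained in `H_l`, and
`s ≠ 1`; being odd and prime to `3`, `s ≥ 5`. The inequality then holds unless `m = 5`. But if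
`m = 5` then `H` embeds into the symmetric group of degree `5`, so `|H|` divides `15` and `H` is
abelian.
-/

/-- The set of irreducible complex characters of `G`. -/
noncomputable def Irr (G : Type) [Group G] : Set (G → ℂ) :=
  {χ | ∃ V : FDRep ℂ G, CategoryTheory.Simple V ∧ χ = FDRep.character V}

/-- A group `G` has a normal `p`-complement: a normal subgroup of order coprime
to `p` whose index is a power of `p`. -/
def HasNormalPComplement (G : Type) [Group G] (p : ℕ) : Prop :=
  ∃ N : Subgroup G, N.Normal ∧ Nat.Coprime (Nat.card N) p ∧ ∃ n : ℕ, N.index = p ^ n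

/-- The irreducible complex characters of `G` with values in `k` whose degree
is not divisible by `p`. -/
noncomputable def IrrKP (G : Type) [Group G] (k : Subfield ℂ) (p : ℕ) : Set (G → ℂ) :=
  {χ | ∃ V : FDRep ℂ G, CategoryTheory.Simple V ∧ χ = FDRep.character V ∧
       (∀ g, χ g ∈ k) ∧ ¬ (p ∣ Module.finrank ℂ V)}

/-- The average of the degrees of the characters in `IrrKP G k p`. -/
noncomputable def acdKP (G : Type) [Group G] (k : Subfield ℂ) (p : ℕ) : ℝ :=
  (∑ᶠ χ ∈ IrrKP G k p, (χ 1).re) / (Nat.card (IrrKP G k p))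

open CategoryTheory

/-! ### Degrees and finiteness of irreducible characters -/

lemma char_isIntegral {G : Type} [Group G] [Finite G] (U : FDRep ℂ G) (g : G) :
    IsIntegral ℤ (U.character g) := by
  unfold FDRep.character
  rw [Module.End.trace_eq_sum_roots_charpoly_of_splits (IsAlgClosed.splits _)]
  refine IsIntegral.multiset_sum fun x hx => ?_
  have hx' : Module.End.HasEigenvalue (U.ρ g) x := by
    rw [Module.End.hasEigenvalue_iff_isRoot_charpoly]
    exact Polynomial.isRoot_of_mem_roots hx
  have h1 : (U.ρ g) ^ Nat.card G = 1 := by rw [← map_pow, pow_card_eq_one', map_one]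
  obtain ⟨v, hv⟩ := hx'.exists_hasEigenvector
  have h2 := hv.pow_apply (Nat.card G)
  rw [h1, Module.End.one_apply] at h2
  have h3 : x ^ Nat.card G = 1 := by
    have : (x ^ Nat.card G - 1) • v = 0 := by rw [sub_smul, ← h2, one_smul, sub_self]
    rcases smul_eq_zero.mp this with h | h
    · exact sub_eq_zero.mp h
    · exact absurd h hv.2
  refine IsIntegral.of_pow Nat.card_pos (n := Nat.card G) ?_
  rw [h3]; exact isIntegral_one

/-- Schur's lemma. -/
lemma scalar_of_commute {G : Type} [Group G] [Finite G] (U : FDRep ℂ G) [Simple U]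
    (T : U →ₗ[ℂ] U) (hT : ∀ g, U.ρ g * T = T * U.ρ g) :
    ∃ c : ℂ, T = c • (1 : U →ₗ[ℂ] U) := by
  have h1 : Module.finrank ℂ (Representation.linHom U.ρ U.ρ).invariants = 1 := by
    rw [LinearEquiv.finrank_eq (Representation.linHom.invariantsEquivFDRepHom U U)]
    exact finrank_endomorphism_simple_eq_one ℂ U
  have mem : ∀ S : U →ₗ[ℂ] U, (∀ g, U.ρ g * S = S * U.ρ g) →
      S ∈ (Representation.linHom U.ρ U.ρ).invariants := by
    intro S hS g
    rw [Representation.linHom_apply]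
    change U.ρ g * (S * U.ρ g⁻¹) = S
    rw [← mul_assoc, hS, mul_assoc, ← map_mul, mul_inv_cancel, map_one, mul_one]
  have hne : (⟨1, mem 1 (fun g => by simp)⟩ : (Representation.linHom U.ρ U.ρ).invariants) ≠ 0 := by
    intro h
    have h0 : (1 : U →ₗ[ℂ] U) = 0 := congrArg Subtype.val h
    have hz : ∀ S : (Representation.linHom U.ρ U.ρ).invariants, S = 0 := by
      rintro ⟨S, hS⟩
      apply Subtype.ext
      change S = 0
      rw [← mul_one S, h0, mul_zero]
    have : Subsingleton (Representation.linHom U.ρ U.ρ).invariants := ⟨fun a b => by rw [hz a, hz b]⟩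
    rw [Module.finrank_zero_of_subsingleton] at h1
    exact zero_ne_one h1
  obtain ⟨c, hc⟩ := (finrank_eq_one_iff_of_nonzero' _ hne).mp h1 ⟨T, mem T hT⟩
  exact ⟨c, (congrArg Subtype.val hc).symm⟩

/-- The degree `d` of an irreducible character `χ` divides `|G|`: the element `∑ χ(g⁻¹) g` of the
group algebra over the algebraic integers is integral and acts as the scalar `|G| / d`. -/
theorem degree_dvd_card {G : Type} [Group G] [Finite G] (U : FDRep ℂ G) [hU : Simple U] :
    Module.finrank ℂ U ∣ Nat.card G := by
  classical
  have := Fintype.ofFinite G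
  let A := integralClosure ℤ ℂ
  let z : MonoidAlgebra A G :=
    ∑ g : G, MonoidAlgebra.single g (⟨U.character g⁻¹, char_isIntegral U g⁻¹⟩ : A)
  let T : U →ₗ[ℂ] U := ∑ g : G, U.character g⁻¹ • U.ρ g
  let F : MonoidAlgebra A G →ₐ[A] Module.End ℂ U := MonoidAlgebra.lift A (Module.End ℂ U) G U.ρ
  have hF : F z = T := by
    simp only [z, T, map_sum, F]
    refine Finset.sum_congr rfl fun g _ => ?_
    rw [MonoidAlgebra.lift_single]
    rfl
  have hint : IsIntegral A T := by
    rw [← hF]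
    exact (IsIntegral.of_finite A z).map F
  obtain ⟨c, hc⟩ := scalar_of_commute U T (by
    intro h
    simp only [T, Finset.mul_sum, Finset.sum_mul]
    refine Fintype.sum_equiv (MulAut.conj h).toEquiv _ _ fun g => ?_
    simp only [MulEquiv.toEquiv_eq_coe, EquivLike.coe_coe, MulAut.conj_apply, mul_smul_comm,
      smul_mul_assoc, ← map_mul]
    rw [show (h * g * h⁻¹)⁻¹ = h * g⁻¹ * h⁻¹ by group, FDRep.char_conj]
    simp)
  have hnorm := (FDRep.simple_iff_char_is_norm_one U).mp hU
  have htr : LinearMap.trace ℂ U T = Nat.card G := by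
    rw [← hnorm]
    simp only [T, map_sum, map_smul, smul_eq_mul, FDRep.character]
    exact Finset.sum_congr rfl fun g _ => mul_comm _ _
  have hcd : c * Module.finrank ℂ U = Nat.card G := by
    rw [← htr, hc, map_smul, LinearMap.trace_one, smul_eq_mul]
  have hG0 : (Nat.card G : ℂ) ≠ 0 := Nat.cast_ne_zero.mpr Nat.card_pos.ne'
  have hd0 : (Module.finrank ℂ U : ℂ) ≠ 0 := fun h => hG0 (by rw [← hcd, h, mul_zero])
  have : Nontrivial U := Module.nontrivial_of_finrank_pos (R := ℂ)
    (Nat.pos_of_ne_zero (by exact_mod_cast hd0))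
  have hcA : IsIntegral A c := by
    rw [hc] at hint
    have h2 : IsIntegral A (algebraMap ℂ (Module.End ℂ U) c) := by
      rw [Algebra.algebraMap_eq_smul_one]; exact hint
    exact (isIntegral_algHom_iff (IsScalarTower.toAlgHom A ℂ (Module.End ℂ U))
      (FaithfulSMul.algebraMap_injective ℂ (Module.End ℂ U))).mp h2
  -- `c = |G| / d` is a rational algebraic integer, hence an integer.
  have hcZ : IsIntegral ℤ c := isIntegral_trans c hcA
  have hcq : c = algebraMap ℚ ℂ (Nat.card G / Module.finrank ℂ U) := by
    rw [eq_div_of_mul_eq hd0 hcd]; simp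
  rw [hcq] at hcZ
  have h3 := (isIntegral_algebraMap_iff (algebraMap ℚ ℂ).injective).mp hcZ
  obtain ⟨n, hn⟩ := IsIntegrallyClosed.isIntegral_iff.mp h3
  have hd0' : (Module.finrank ℂ U : ℚ) ≠ 0 := by exact_mod_cast hd0
  rw [eq_div_iff hd0'] at hn
  have hn' : n * (Module.finrank ℂ U : ℤ) = Nat.card G := by
    have : (algebraMap ℤ ℚ) n = (n : ℚ) := rfl
    rw [this] at hn
    exact_mod_cast hn
  exact Int.natCast_dvd_natCast.mp ⟨n, by rw [← hn', mul_comm]⟩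

/-- Distinct irreducible characters are orthonormal, hence linearly independent in the
finite-dimensional space `G → ℂ`. -/
lemma Irr_finite (G : Type) [Group G] [Finite G] :
    (Irr G).Finite := by
  classical
  have := Fintype.ofFinite G
  have := invertibleOfNonzero (NeZero.ne (Nat.card G : ℂ))
  set S := Irr G
  have hli : LinearIndependent ℂ (fun χ : S => (χ : G → ℂ)) := by
    rw [linearIndependent_iff']
    intro s a hs i hi
    have key : ∀ j : S, (Nat.card G : ℂ)⁻¹ * ∑ g : G, (j : G → ℂ) g * (i : G → ℂ) g⁻¹ =
        if j = i then 1 else 0 := by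
      rintro ⟨j, Vj, hVj, rfl⟩
      obtain ⟨i, Vi, hVi, rfl⟩ := i
      rw [FDRep.char_orthonormal]
      by_cases h : Nonempty (Vj ≅ Vi)
      · rw [if_pos h, if_pos (Subtype.ext (FDRep.char_iso h.some))]
      · rw [if_neg h, if_neg]
        intro h'
        have h1 := FDRep.char_orthonormal Vj Vi
        have h2 := FDRep.char_orthonormal Vi Vi
        have e : Vj.character = Vi.character := congrArg Subtype.val h'
        rw [if_neg h, e] at h1
        rw [if_pos ⟨Iso.refl _⟩] at h2
        exact zero_ne_one (h1.symm.trans h2)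
    have h3 : (Nat.card G : ℂ)⁻¹ * ∑ g : G, (∑ j ∈ s, a j • (j : G → ℂ)) g * (i : G → ℂ) g⁻¹ = 0 := by
      rw [hs]; simp
    simp only [Finset.sum_apply, Pi.smul_apply, smul_eq_mul, Finset.sum_mul] at h3
    rw [Finset.sum_comm, Finset.mul_sum] at h3
    have h4 : ∀ j ∈ s, (Nat.card G : ℂ)⁻¹ * ∑ g : G, a j * (j : G → ℂ) g * (i : G → ℂ) g⁻¹ =
        if j = i then a j else 0 := by
      intro j _
      simp only [mul_assoc]
      rw [← Finset.mul_sum, mul_left_comm, key j]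
      simp
    rw [Finset.sum_congr rfl h4] at h3
    simpa [hi] using h3
  have : Finite S := hli.finite
  exact Set.toFinite S

/-! ### Monomial representations attached to orbits of characters of `V` -/

/-- The complex linear characters of `V`, wrapped in a structure depending on `φ` so as to carry the
action of `H` given by `(h • l)(v) = l(φ(h⁻¹) v)`. -/
@[ext]
structure DualChar {V H : Type} [CommGroup V] [Group H] (φ : H →* MulAut V) : Type where
  /-- The underlying homomorphism. -/
  toHom : V →* ℂˣ

section Dual
variable {V H : Type} [CommGroup V] [Group H] {φ : H →* MulAut V}

instance : MulAction H (DualChar φ) where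
  smul h l := ⟨l.toHom.comp (φ h⁻¹).toMonoidHom⟩
  one_smul l := by
    apply DualChar.ext
    ext v
    change (l.toHom (φ 1⁻¹ v) : ℂ) = _
    simp
  mul_smul a b l := by
    apply DualChar.ext
    ext v
    change (l.toHom (φ (a * b)⁻¹ v) : ℂ) = (l.toHom (φ b⁻¹ (φ a⁻¹ v)) : ℂ)
    simp [mul_inv_rev, MulAut.mul_apply]

lemma DualChar.smul_apply (h : H) (l : DualChar φ) (v : V) :
    (h • l).toHom v = l.toHom (φ h⁻¹ v) := rfl

variable [Fintype V]

instance : Finite (DualChar φ) :=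
  Finite.of_injective (fun l : DualChar φ => l.toHom) (fun _ _ h => DualChar.ext h)

/-- Orthogonality of the linear characters of `V`. -/
lemma sum_char_mul_inv (a b : V →* ℂˣ) [Decidable (a = b)] :
    ∑ v : V, (a v : ℂ) * (b v⁻¹ : ℂ) = if a = b then (Nat.card V : ℂ) else 0 := by
  classical
  let f : V →* ℂ := (Units.coeHom ℂ).comp (a * b⁻¹)
  have hf : ∀ v, (a v : ℂ) * (b v⁻¹ : ℂ) = f v := by intro v; simp [f]
  simp only [hf]
  split_ifs with h
  · subst h
    simp [f, Nat.card_eq_fintype_card]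
  · refine sum_hom_units_eq_zero f fun hf1 => h ?_
    ext v
    have h1 : ((a * b⁻¹) v : ℂ) = 1 := by
      have := DFunLike.congr_fun hf1 v
      simpa [f] using this
    have h2 : (a * b⁻¹) v = 1 := Units.ext h1
    rw [MonoidHom.mul_apply, MonoidHom.inv_apply, mul_inv_eq_one] at h2
    rw [h2]

noncomputable instance (l : DualChar φ) : Fintype (MulAction.orbit H l) := Fintype.ofFinite _

/-- The monomial representation of `V ⋊ H` on the functions on the orbit of `l`, twisted by `μ`:
`((v, h) f)(η) = μ(h) η(v) f(h⁻¹ η)`. -/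
noncomputable def monoRep (l : DualChar φ) (μ : H →* ℂˣ) :
    Representation ℂ (V ⋊[φ] H) (MulAction.orbit H l → ℂ) where
  toFun g :=
    { toFun := fun f η => (μ g.right : ℂ) * (η.1.toHom g.left : ℂ) * f (g.right⁻¹ • η)
      map_add' := fun f f' => by ext η; simp [mul_add]
      map_smul' := fun c f => by ext η; simp; ring }
  map_one' := by ext1 f; ext1 η; simp
  map_mul' g g' := by
    refine LinearMap.ext fun f => funext fun η => ?_
    have h1 : (g.right⁻¹ • η).1.toHom g'.left = η.1.toHom (φ g.right g'.left) := by
      rw [MulAction.orbit.coe_smul, DualChar.smul_apply, inv_inv]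
    simp only [LinearMap.coe_mk, AddHom.coe_mk, Module.End.mul_apply, h1,
      SemidirectProduct.mul_left, SemidirectProduct.mul_right, map_mul, Units.val_mul,
      mul_inv_rev, mul_smul]
    ring

/-- `monoRep` as an object of `FDRep`. -/
noncomputable def monoFD (l : DualChar φ) (μ : H →* ℂˣ) : FDRep ℂ (V ⋊[φ] H) :=
  FDRep.of (monoRep l μ)

open Classical in
lemma monoFD_character (l : DualChar φ) (μ : H →* ℂˣ) (g : V ⋊[φ] H) :
    (monoFD l μ).character g = (μ g.right : ℂ) *
      ∑ η : MulAction.orbit H l, if g.right • η = η then (η.1.toHom g.left : ℂ) else 0 := by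
  have h0 : (monoFD l μ).character g = LinearMap.trace ℂ _ (monoRep l μ g) := rfl
  rw [h0, LinearMap.trace_eq_matrix_trace ℂ (Pi.basisFun ℂ _), Matrix.trace, Finset.mul_sum]
  refine Finset.sum_congr rfl fun η _ => ?_
  rw [Matrix.diag_apply, LinearMap.toMatrix_apply, Pi.basisFun_apply, Pi.basisFun_repr]
  change (μ g.right : ℂ) * (η.1.toHom g.left : ℂ) *
    (Pi.single η 1 : MulAction.orbit H l → ℂ) (g.right⁻¹ • η) = _
  rw [Pi.single_apply, mul_assoc]
  by_cases h : g.right • η = η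
  · rw [if_pos h, if_pos (by rw [inv_smul_eq_iff, h]), mul_one]
  · rw [if_neg h, if_neg (by rw [inv_smul_eq_iff]; exact fun e => h e.symm), mul_zero]

/-- The character norm of the monomial representation is `|V|` times the total number of fixed
points of elements of `H` on the orbit, which is `|V| |H|` by Burnside's lemma. -/
lemma monoFD_simple [Fintype H] (l : DualChar φ) (μ : H →* ℂˣ) : Simple (monoFD l μ) := by
  classical
  have : Finite (V ⋊[φ] H) := Finite.of_equiv _ SemidirectProduct.equivProd.symm
  have := Fintype.ofFinite (V ⋊[φ] H)
  rw [FDRep.simple_iff_char_is_norm_one]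
  rw [Fintype.sum_equiv SemidirectProduct.equivProd
    (fun g => (monoFD l μ).character g * (monoFD l μ).character g⁻¹)
    (fun p : V × H => (monoFD l μ).character ⟨p.1, p.2⟩ * (monoFD l μ).character ⟨p.1, p.2⟩⁻¹)
    (fun g => rfl), Fintype.sum_prod_type_right]
  have hterm : ∀ h : H, ∑ v : V,
      (monoFD l μ).character ⟨v, h⟩ * (monoFD l μ).character ⟨v, h⟩⁻¹ =
      (Nat.card V : ℂ) * Fintype.card (MulAction.fixedBy (MulAction.orbit H l) h) := by
    intro h
    have e1 : ∀ v : V, (monoFD l μ).character ⟨v, h⟩ * (monoFD l μ).character ⟨v, h⟩⁻¹ =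
        ∑ η : MulAction.orbit H l, ∑ η' : MulAction.orbit H l,
          if h • η = η ∧ h • η' = η' then (η.1.toHom v : ℂ) * (η'.1.toHom v⁻¹ : ℂ) else 0 := by
      intro v
      rw [monoFD_character, monoFD_character]
      simp only [SemidirectProduct.inv_left, SemidirectProduct.inv_right, map_inv]
      rw [mul_mul_mul_comm, Units.mul_inv, one_mul, Finset.sum_mul_sum]
      refine Finset.sum_congr rfl fun η _ => Finset.sum_congr rfl fun η' _ => ?_
      by_cases h1 : h • η = η
      · by_cases h2 : h • η' = η'
        · have h3 : h⁻¹ • η' = η' := by rw [inv_smul_eq_iff, h2]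
          rw [if_pos h1, if_pos h3, if_pos ⟨h1, h2⟩]
          have h4 : η'.1.toHom ((φ h)⁻¹ v) = η'.1.toHom v := by
            have := DualChar.smul_apply h η'.1 v
            rw [← MulAction.orbit.coe_smul, h2, map_inv] at this
            exact this.symm
          rw [h4]
        · have h3 : ¬ h⁻¹ • η' = η' := by
            rw [inv_smul_eq_iff]; exact fun e => h2 e.symm
          rw [if_neg h3, mul_zero, if_neg (fun e => h2 e.2)]
      · rw [if_neg h1, zero_mul, if_neg (fun e => h1 e.1)]
    simp only [e1]
    rw [Finset.sum_comm]
    have e2 : ∀ η : MulAction.orbit H l, ∑ v : V, ∑ η' : MulAction.orbit H l,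
          (if h • η = η ∧ h • η' = η' then (η.1.toHom v : ℂ) * (η'.1.toHom v⁻¹ : ℂ) else 0) =
          if h • η = η then (Nat.card V : ℂ) else 0 := by
      intro η
      rw [Finset.sum_comm]
      by_cases h1 : h • η = η
      · rw [if_pos h1, Finset.sum_eq_single η]
        · simp only [h1, and_self, if_true]
          rw [sum_char_mul_inv, if_pos rfl]
        · intro η' _ hne
          by_cases h2 : h • η' = η'
          · simp only [h1, h2, and_self, if_true]
            rw [sum_char_mul_inv, if_neg]
            intro e
            exact hne (Subtype.ext (DualChar.ext e.symm))
          · simp [h2]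
        · simp
      · simp [h1]
    simp only [e2]
    rw [← Finset.sum_filter, Finset.sum_const, nsmul_eq_mul, mul_comm, Fintype.card_subtype]
    rfl
  simp only [hterm]
  rw [← Finset.mul_sum, ← Nat.cast_sum]
  have : Fintype (Quotient (MulAction.orbitRel H (MulAction.orbit H l))) := Fintype.ofFinite _
  rw [MulAction.sum_card_fixedBy_eq_card_orbits_mul_card_group]
  have h1 : Fintype.card (Quotient (MulAction.orbitRel H (MulAction.orbit H l))) = 1 := by
    rw [Fintype.card_eq_one_iff_nonempty_unique]
    have : Subsingleton (Quotient (MulAction.orbitRel H (MulAction.orbit H l))) :=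
      (MulAction.pretransitive_iff_subsingleton_quotient H (MulAction.orbit H l)).mp inferInstance
    exact ⟨⟨⟨Quotient.mk _ ⟨l, MulAction.mem_orbit_self l⟩⟩, fun _ => Subsingleton.elim _ _⟩⟩
  rw [h1, one_mul, SemidirectProduct.card, Nat.cast_mul, Nat.card_eq_fintype_card (α := H)]

open Classical in
/-- Pairing the character with `l0` over the coset of `V` at an `h` fixing `l0` tells whether `l0` lies
in the orbit of `l` and, if so, recovers `μ h`. -/
lemma monoFD_detect (l l0 : DualChar φ) (μ : H →* ℂˣ) (h : H) (hl0 : h • l0 = l0) :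
    ∑ v : V, (monoFD l μ).character ⟨v, h⟩ * (l0.toHom v⁻¹ : ℂ) =
      if l0 ∈ MulAction.orbit H l then (Nat.card V : ℂ) * μ h else 0 := by
  have e1 : ∀ η : MulAction.orbit H l,
      ∑ v : V, (if h • η = η then (η.1.toHom v : ℂ) else 0) * (l0.toHom v⁻¹ : ℂ) =
      if η.1 = l0 then (Nat.card V : ℂ) else 0 := by
    intro η
    by_cases h1 : h • η = η
    · simp only [h1, if_true]
      rw [sum_char_mul_inv]
      simp only [DualChar.ext_iff]
    · have : η.1 ≠ l0 := by
        intro e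
        exact h1 (Subtype.ext (by rw [MulAction.orbit.coe_smul, e, hl0]))
      simp [h1, this]
  simp only [monoFD_character, mul_assoc, Finset.sum_mul]
  rw [← Finset.mul_sum, Finset.sum_comm]
  simp only [e1]
  split_ifs with hmem
  · rw [Finset.sum_eq_single ⟨l0, hmem⟩]
    · simp [mul_comm]
    · intro b _ hb
      exact if_neg fun e => hb (Subtype.ext e)
    · simp
  · rw [Finset.sum_eq_zero, mul_zero]
    intro η _
    exact if_neg fun e : η.1 = l0 => hmem (e ▸ η.2)

lemma monoFD_finrank (l : DualChar φ) (μ : H →* ℂˣ) :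
    Module.finrank ℂ (monoFD l μ) = (MulAction.stabilizer H l).index := by
  change Module.finrank ℂ (MulAction.orbit H l → ℂ) = _
  rw [Module.finrank_fintype_fun_eq_card, MulAction.index_stabilizer, Set.ncard,
    ← Nat.card_eq_fintype_card]
  rfl

end Dual

/-! ### Group theory of the action -/

section GroupTheory
variable {V H : Type} [CommGroup V] [Group H] {φ : H →* MulAut V}

/-- Stabilizers of nontrivial characters of `V` are core-free: for `n ∈ N` all elements
`φ(n)(v) v⁻¹` lie in the largest `H`-invariant subgroup of `ker l`, which is trivial. -/
lemma eq_bot_of_le_stabilizer (hfaith : Function.Injective φ)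
    (hirr : ∀ W : Subgroup V, (∀ (h : H) (v : V), v ∈ W → φ h v ∈ W) → W = ⊥ ∨ W = ⊤)
    (l : DualChar φ) (hl : l.toHom ≠ 1) (N : Subgroup H) [hN : N.Normal]
    (hNl : N ≤ MulAction.stabilizer H l) : N = ⊥ := by
  let W : Subgroup V :=
    { carrier := {v | ∀ h, l.toHom (φ h v) = 1}
      one_mem' := fun h => by simp
      mul_mem' := fun {a b} ha hb h => by rw [map_mul, map_mul, ha h, hb h, one_mul]
      inv_mem' := fun {a} ha h => by rw [map_inv, map_inv, ha h, inv_one] }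
  have hW : W = ⊥ := by
    rcases hirr W (fun h v hv h' => by
      have := hv (h' * h)
      rwa [map_mul, MulAut.mul_apply] at this) with h | h
    · exact h
    · exfalso
      apply hl
      ext v
      have hv : v ∈ W := h ▸ Subgroup.mem_top v
      have := hv 1
      rw [map_one, MulAut.one_apply] at this
      rw [this, MonoidHom.one_apply]
  rw [Subgroup.eq_bot_iff_forall]
  intro n hn
  apply hfaith
  rw [map_one]
  ext v
  rw [MulAut.one_apply]
  have hmem : φ n v * v⁻¹ ∈ W := by
    intro h
    have hc : (h * n * h⁻¹)⁻¹ ∈ MulAction.stabilizer H l :=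
      hNl (N.inv_mem (hN.conj_mem n hn h))
    have h1 := DualChar.smul_apply (h * n * h⁻¹)⁻¹ l (φ h v)
    rw [MulAction.mem_stabilizer_iff.mp hc, inv_inv, ← MulAut.mul_apply, ← map_mul,
      inv_mul_cancel_right, map_mul, MulAut.mul_apply] at h1
    rw [map_mul, map_inv, map_mul, map_inv, ← h1, mul_inv_cancel]
  rw [hW, Subgroup.mem_bot, mul_inv_eq_one] at hmem
  exact hmem

lemma mul_comm_of_card_dvd_fifteen {K : Type} [Group K] [Finite K] (hK : Nat.card K ∣ 15)
    (a b : K) : a * b = b * a := by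
  have hsq : Squarefree (Nat.card K) :=
    Squarefree.squarefree_of_dvd hK (by
      rw [show 15 = 3 * 5 by norm_num, Nat.squarefree_mul (by norm_num)]
      exact ⟨Nat.prime_three.squarefree, Nat.prime_five.squarefree⟩)
  have := IsZGroup.of_squarefree hsq
  have hdiv : ∀ n, n ∣ 15 → n = 1 ∨ n = 3 ∨ n = 5 ∨ n = 15 := by
    intro n hn
    have : n ∈ Nat.divisors 15 := by simpa using hn
    rw [show Nat.divisors 15 = {1, 3, 5, 15} by decide] at this
    simpa using this
  have hnil : Group.IsNilpotent K := by
    rw [Group.isNilpotent_of_finite_tfae.out 0 3 rfl rfl]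
    intro p hp P
    by_cases hpK : p ∣ Nat.card K
    · have hp15 : p = 3 ∨ p = 5 := by
        rcases hdiv p (hpK.trans hK) with h | h | h | h
        · exact absurd (h ▸ hp.out) (by norm_num)
        · exact Or.inl h
        · exact Or.inr h
        · exact absurd (h ▸ hp.out) (by norm_num)
      have h1 : Nat.card (Sylow p K) ≡ 1 [MOD p] := card_sylow_modEq_one p K
      have h2 : Nat.card (Sylow p K) ∣ 15 :=
        (P.card_dvd_index.trans (Subgroup.index_dvd_card _)).trans hK
      have h3 : Nat.card (Sylow p K) = 1 := by
        rcases hdiv _ h2 with h | h | h | h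
        · exact h
        all_goals
          rw [h] at h1
          rcases hp15 with rfl | rfl <;> exact absurd h1 (by decide)
      have := (Nat.card_eq_one_iff_unique.mp h3).1
      exact Sylow.normal_of_subsingleton P
    · have : (P : Subgroup K) = ⊥ := by
        obtain ⟨n, hn⟩ := P.2.exists_card_eq
        have hd : p ^ n ∣ Nat.card K := hn ▸ Subgroup.card_subgroup_dvd_card _
        have hn0 : n = 0 := by
          by_contra h0
          exact hpK ((dvd_pow_self p h0).trans hd)
        rw [hn0, pow_zero] at hn
        exact Subgroup.card_eq_one.mp hn
      rw [this]
      infer_instance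
  have : IsCyclic K := inferInstance
  exact IsMulCommutative.is_comm.comm a b

/-- A Sylow `3`-subgroup of `H` acts on the characters of `V`, whose number is divisible by `3`, so
it fixes one besides the trivial one. -/
lemma exists_good_char [Fintype V] [Fintype H] (hV : ∀ v : V, v ^ 3 = 1) (hV1 : Nontrivial V) :
    ∃ l : DualChar φ, l.toHom ≠ 1 ∧ ¬ 3 ∣ (MulAction.stabilizer H l).index := by
  have : Fact (Nat.Prime 3) := ⟨Nat.prime_three⟩
  let P : Sylow 3 H := default
  have hcard : 3 ∣ Nat.card (DualChar φ) := by
    have e : DualChar φ ≃ (V →* ℂˣ) := ⟨fun l => l.toHom, fun f => ⟨f⟩, fun _ => rfl, fun _ => rfl⟩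
    rw [Nat.card_congr e, CommGroup.card_monoidHom_of_hasEnoughRootsOfUnity]
    obtain ⟨v, hv⟩ := exists_ne (1 : V)
    have : orderOf v = 3 := orderOf_eq_prime (hV v) hv
    exact this ▸ orderOf_dvd_natCard v
  have hfix : (⟨1⟩ : DualChar φ) ∈ MulAction.fixedPoints P (DualChar φ) := by
    intro h
    apply DualChar.ext
    ext v
    rfl
  obtain ⟨l, hl, hne⟩ :=
    P.2.exists_fixed_point_of_prime_dvd_card_of_fixed_point (DualChar φ) hcard hfix
  refine ⟨l, fun h => hne (DualChar.ext h.symm), fun h3 => ?_⟩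
  have hle : (P : Subgroup H) ≤ MulAction.stabilizer H l := fun h hh => hl ⟨h, hh⟩
  exact P.not_dvd_index (h3.trans (Subgroup.index_dvd_of_le hle))

/-- Such `μ` are characters of the abelian group `H / H'S`. -/
lemma card_trivial_on_le [Fintype H] (S : Subgroup H) :
    Nat.card {μ : H →* ℂˣ // ∀ h ∈ S, μ h = 1} ≤ (commutator H ⊔ S).index := by
  let K := commutator H ⊔ S
  have hcK : commutator H ≤ K := le_sup_left
  have hK : K.Normal := Subgroup.Normal.of_commutator_le H hcK
  have hcomm : IsMulCommutative (H ⧸ K) :=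
    Subgroup.Normal.quotient_commutative_iff_commutator_le.mpr hcK
  let _ : CommGroup (H ⧸ K) :=
    { (inferInstance : Group (H ⧸ K)) with mul_comm := hcomm.is_comm.comm }
  have h1 : Nat.card ((H ⧸ K) →* ℂˣ) = K.index :=
    CommGroup.card_monoidHom_of_hasEnoughRootsOfUnity (H ⧸ K) ℂ
  change _ ≤ K.index
  rw [← h1]
  have hker : ∀ μ : {μ : H →* ℂˣ // ∀ h ∈ S, μ h = 1}, ∀ h ∈ K, μ.1 h = 1 := by
    intro μ h hh
    have : K ≤ μ.1.ker := sup_le (Abelianization.commutator_subset_ker μ.1) (fun x hx => μ.2 x hx)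
    exact this hh
  refine Nat.card_le_card_of_injective
    (fun μ : {μ : H →* ℂˣ // ∀ h ∈ S, μ h = 1} => QuotientGroup.lift K μ.1 (hker μ)) ?_
  intro μ ν hμν
  apply Subtype.ext
  ext h
  have this : μ.1 h = ν.1 h := DFunLike.congr_fun hμν (QuotientGroup.mk h)
  rw [this]

/-- The numerical inequality `81 + 32 t ≤ 17 m` for `m = |H : H_l|` and `t = |H : H' H_l|`. -/
lemma index_bound [Fintype H] (hna : ∃ a b : H, a * b ≠ b * a)
    (hfaith : Function.Injective φ)
    (hirr : ∀ W : Subgroup V, (∀ (h : H) (v : V), v ∈ W → φ h v ∈ W) → W = ⊥ ∨ W = ⊤)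
    (hodd : Odd (Nat.card H))
    (l : DualChar φ) (hl : l.toHom ≠ 1) (h3 : ¬ 3 ∣ (MulAction.stabilizer H l).index) :
    81 + 32 * (commutator H ⊔ MulAction.stabilizer H l).index ≤
      17 * (MulAction.stabilizer H l).index := by
  set S := MulAction.stabilizer H l
  set K := commutator H ⊔ S
  have hSK : S ≤ K := le_sup_right
  have hm : S.relIndex K * K.index = S.index := Subgroup.relIndex_mul_index hSK
  have hSodd : Odd S.index := Odd.of_dvd_nat hodd (Subgroup.index_dvd_card S)
  have hcomm : ¬ commutator H ≤ S := by
    intro h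
    have := eq_bot_of_le_stabilizer hfaith hirr l hl (commutator H) h
    rw [commutator_eq_bot_iff] at this
    obtain ⟨a, b, hab⟩ := hna
    exact hab (this.is_comm.comm a b)
  have hs1 : S.relIndex K ≠ 1 := fun h =>
    hcomm (le_sup_left.trans (Subgroup.relIndex_eq_one.mp h))
  have hsodd : Odd (S.relIndex K) := Odd.of_dvd_nat hSodd ⟨_, hm.symm⟩
  have hs3 : ¬ 3 ∣ S.relIndex K := fun h => h3 (h.trans ⟨_, hm.symm⟩)
  have htpos : 0 < K.index := Nat.pos_of_ne_zero Subgroup.index_ne_zero_of_finite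
  -- A faithful transitive action on five points would force `|H|` to divide `15`.
  have hm5 : S.index ≠ 5 := by
    intro h5
    have hcore : S.normalCore = ⊥ :=
      eq_bot_of_le_stabilizer hfaith hirr l hl _ (Subgroup.normalCore_le S)
    rw [Subgroup.normalCore_eq_ker, MonoidHom.ker_eq_bot_iff] at hcore
    have hd := Subgroup.card_dvd_of_injective _ hcore
    have hperm : Nat.card (Equiv.Perm (H ⧸ S)) = 120 := by
      rw [Nat.card_perm, ← Subgroup.index_eq_card, h5]; rfl
    rw [hperm] at hd
    have h15 : Nat.card H ∣ 15 := by
      have hco : Nat.Coprime (Nat.card H) 8 :=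
        Nat.Coprime.pow_right 3 (Nat.coprime_two_right.mpr hodd)
      exact hco.dvd_of_dvd_mul_left (show Nat.card H ∣ 8 * 15 from hd)
    obtain ⟨a, b, hab⟩ := hna
    exact hab (mul_comm_of_card_dvd_fifteen h15 a b)
  rw [← hm] at hm5 ⊢
  generalize S.relIndex K = s at *
  generalize K.index = t at *
  have hs5 : 5 ≤ s := by
    obtain ⟨r, rfl⟩ := hsodd
    by_contra hlt
    have : r = 0 ∨ r = 1 := by omega
    rcases this with rfl | rfl
    · exact hs1 rfl
    · exact hs3 (by norm_num)
  by_cases ht : t = 1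
  · subst ht
    obtain ⟨r, rfl⟩ := hsodd
    omega
  · have ht2 : 2 ≤ t := by omega
    nlinarith

end GroupTheory

/-! ### Counting characters -/

section Counting
variable {V H : Type} [CommGroup V] [Group H] {φ : H →* MulAut V}

lemma exists_linear_of_finrank_one {G : Type} [Group G] (U : FDRep ℂ G)
    (hU : Module.finrank ℂ U = 1) : ∃ θ : G →* ℂˣ, ∀ g, U.character g = θ g := by
  have hs : ∀ g, U.ρ g = U.character g • (1 : U →ₗ[ℂ] U) := by
    intro g
    obtain ⟨c, hc, -⟩ := LinearMap.existsUnique_eq_smul_id_of_finrank_eq_one hU (U.ρ g)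
    have : U.character g = c := by
      rw [FDRep.character, hc, map_smul, LinearMap.trace_id, hU]
      simp
    rw [this]
    exact hc
  let f : G →* ℂ :=
    { toFun := U.character
      map_one' := by rw [FDRep.char_one, hU, Nat.cast_one]
      map_mul' := fun a b => by
        rw [FDRep.character, map_mul, hs a, hs b, smul_mul_smul_comm, one_mul, map_smul,
          LinearMap.trace_one, hU]
        simp }
  exact ⟨f.toHomUnits, fun g => rfl⟩

/-- A linear character of `V ⋊ H` is trivial on `V`; otherwise it would be faithful on `V`, and
`H`-invariance would make `H` act trivially. -/
lemma linear_trivial_on (hna : ∃ a b : H, a * b ≠ b * a) (hfaith : Function.Injective φ)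
    (hirr : ∀ W : Subgroup V, (∀ (h : H) (v : V), v ∈ W → φ h v ∈ W) → W = ⊥ ∨ W = ⊤)
    (θ : V ⋊[φ] H →* ℂˣ) (g : V ⋊[φ] H) :
    θ g = θ (SemidirectProduct.inr g.right) := by
  have hconj : ∀ h v, θ (SemidirectProduct.inl (φ h v)) = θ (SemidirectProduct.inl v) := by
    intro h v
    rw [SemidirectProduct.inl_aut, map_mul, map_mul, mul_comm, ← mul_assoc, ← map_mul,
      ← map_mul SemidirectProduct.inr, inv_mul_cancel, map_one, map_one, one_mul]
  have hker : ∀ v, θ (SemidirectProduct.inl v) = 1 := by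
    rcases hirr (θ.comp SemidirectProduct.inl).ker (fun h v hv => by
      rw [MonoidHom.mem_ker, MonoidHom.comp_apply] at hv ⊢
      rw [hconj, hv]) with hb | ht
    · exfalso
      rw [MonoidHom.ker_eq_bot_iff] at hb
      have htriv : ∀ h : H, h = 1 := by
        intro h
        apply hfaith
        rw [map_one]
        ext v
        exact hb (hconj h v)
      obtain ⟨a, b, hab⟩ := hna
      exact hab (by rw [htriv a, htriv b])
    · intro v
      have : v ∈ (θ.comp SemidirectProduct.inl).ker := ht ▸ Subgroup.mem_top v
      exact this
  conv_lhs => rw [← SemidirectProduct.inl_left_mul_inr_right g, map_mul, hker, one_mul]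

lemma monoFD_character_mem [Fintype V] (hV : ∀ v : V, v ^ 3 = 1) (k : Subfield ℂ)
    (hk3 : ∀ z : ℂ, IsPrimitiveRoot z 3 → z ∈ k) (l : DualChar φ) (μ : H →* ℂˣ)
    (hμ : ∀ h, (μ h : ℂ) ∈ k) (g : V ⋊[φ] H) : (monoFD l μ).character g ∈ k := by
  classical
  rw [monoFD_character]
  refine k.mul_mem (hμ _) (k.sum_mem fun η _ => ?_)
  split_ifs
  · have h3 : (η.1.toHom g.left : ℂ) ^ 3 = 1 := by
      rw [← Units.val_pow_eq_pow_val, ← map_pow, hV, map_one, Units.val_one]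
    by_cases h1 : (η.1.toHom g.left : ℂ) = 1
    · rw [h1]; exact k.one_mem
    · have : Fact (Nat.Prime 3) := ⟨Nat.prime_three⟩
      have ho := orderOf_eq_prime h3 h1
      exact hk3 _ (ho ▸ IsPrimitiveRoot.orderOf _)
  · exact k.zero_mem

/-- If `h` inverts `l` then `h ^ 2` fixes `l`, hence so does `h`, as it has odd order; then `l` is
both of order dividing `2` and of order dividing `3`. -/
lemma inv_notMem_orbit [Fintype H] (hV : ∀ v : V, v ^ 3 = 1) (hodd : Odd (Nat.card H))
    (l : DualChar φ) (hl : l.toHom ≠ 1) : (⟨l.toHom⁻¹⟩ : DualChar φ) ∉ MulAction.orbit H l := by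
  rintro ⟨h, hh⟩
  have hh : h • l = ⟨l.toHom⁻¹⟩ := hh
  have h2 : h ^ 2 ∈ MulAction.stabilizer H l := by
    rw [MulAction.mem_stabilizer_iff, pow_two, mul_smul, hh]
    apply DualChar.ext
    ext v
    have := DFunLike.congr_fun (congrArg DualChar.toHom hh) v
    rw [DualChar.smul_apply, MonoidHom.inv_apply] at this
    rw [DualChar.smul_apply, MonoidHom.inv_apply, this, inv_inv]
  have h1 : h ∈ MulAction.stabilizer H l := by
    obtain ⟨r, hr⟩ := hodd
    have : h = (h ^ 2) ^ (r + 1) := by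
      rw [← pow_mul, show 2 * (r + 1) = Nat.card H + 1 by omega, pow_succ, pow_card_eq_one',
        one_mul]
    rw [this]
    exact Subgroup.pow_mem _ h2 _
  rw [MulAction.mem_stabilizer_iff, hh] at h1
  apply hl
  ext v
  have e := DFunLike.congr_fun (congrArg DualChar.toHom h1) v
  rw [MonoidHom.inv_apply] at e
  have e3 : l.toHom v ^ 3 = 1 := by rw [← map_pow, hV, map_one]
  have e2 : l.toHom v * l.toHom v = 1 := by
    nth_rewrite 1 [← e]
    exact inv_mul_cancel _
  rw [pow_succ, pow_two, e2, one_mul] at e3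
  rw [e3, MonoidHom.one_apply]

lemma stabilizer_inv (l : DualChar φ) :
    MulAction.stabilizer H (⟨l.toHom⁻¹⟩ : DualChar φ) = MulAction.stabilizer H l := by
  ext h
  have e : h • (⟨l.toHom⁻¹⟩ : DualChar φ) = ⟨(h • l).toHom⁻¹⟩ := rfl
  rw [MulAction.mem_stabilizer_iff, MulAction.mem_stabilizer_iff, e, DualChar.ext_iff,
    DualChar.ext_iff]
  exact inv_inj (a := (h • l).toHom) (b := l.toHom)

open Classical in
/-- For fixed `l`, each character arises from at most `|H : H' H_l|` choices of `μ`. -/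
lemma card_le_mul_card_monoFD [Fintype V] [Fintype H] (k : Subfield ℂ) (l : DualChar φ)
    [Fintype {μ : H →* ℂˣ // ∀ h, (μ h : ℂ) ∈ k}] :
    Fintype.card {μ : H →* ℂˣ // ∀ h, (μ h : ℂ) ∈ k} ≤
      (commutator H ⊔ MulAction.stabilizer H l).index *
        (Finset.univ.image fun μ : {μ : H →* ℂˣ // ∀ h, (μ h : ℂ) ∈ k} =>
          (monoFD l μ.1).character).card := by
  rw [← Finset.card_univ]
  refine Finset.card_le_mul_card_image _ _ fun χ hχ => ?_
  obtain ⟨μ₀, -, rfl⟩ := Finset.mem_image.mp hχ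
  refine le_trans ?_ (card_trivial_on_le (MulAction.stabilizer H l))
  rw [← Fintype.card_coe, ← Nat.card_eq_fintype_card]
  have hagree : ∀ μ : {μ : H →* ℂˣ // ∀ h, (μ h : ℂ) ∈ k},
      (monoFD l μ.1).character = (monoFD l μ₀.1).character →
      ∀ h ∈ MulAction.stabilizer H l, (μ.1 / μ₀.1) h = 1 := by
    intro μ hμ h hh
    have e1 := monoFD_detect l l μ.1 h hh
    have e2 := monoFD_detect l l μ₀.1 h hh
    rw [hμ, e2, if_pos (MulAction.mem_orbit_self l), if_pos (MulAction.mem_orbit_self l)] at e1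
    have hV0 : (Nat.card V : ℂ) ≠ 0 := Nat.cast_ne_zero.mpr Nat.card_pos.ne'
    rw [MonoidHom.div_apply, div_eq_one]
    exact (Units.ext (mul_left_cancel₀ hV0 e1)).symm
  refine Nat.card_le_card_of_injective
    (fun μ => ⟨μ.1.1 / μ₀.1, hagree μ.1 (Finset.mem_filter.mp μ.2).2⟩) fun μ ν e => ?_
  have e' : μ.1.1 / μ₀.1 = ν.1.1 / μ₀.1 := congrArg Subtype.val e
  exact Subtype.ext (Subtype.ext (div_left_injective e'))

end Counting

/-! ### The averaging argument -/

theorem acdKP_ge_81_div_17_nonabelian_char_three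
    (V : Type) [CommGroup V] [Fintype V] (hV : ∀ v : V, v ^ 3 = 1)
    (H : Type) [Group H] [Fintype H] (hna : ∃ a b : H, a * b ≠ b * a)
    (φ : H →* MulAut V) (hfaith : Function.Injective φ)
    (hirr : ∀ W : Subgroup V, (∀ (h : H) (v : V), v ∈ W → φ h v ∈ W) → W = ⊥ ∨ W = ⊤)
    (hG : Odd (Nat.card (V ⋊[φ] H)))
    (k : Subfield ℂ) (hk3 : ∀ z : ℂ, IsPrimitiveRoot z 3 → z ∈ k) :
    (81 : ℝ) / 17 ≤ acdKP (V ⋊[φ] H) k 3 := by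
  classical
  have hGfin : Finite (V ⋊[φ] H) := Finite.of_equiv _ SemidirectProduct.equivProd.symm
  have hHodd : Odd (Nat.card H) := by
    rw [SemidirectProduct.card] at hG
    exact (Nat.odd_mul.mp hG).2
  have hVnt : Nontrivial V := by
    by_contra hV1
    rw [not_nontrivial_iff_subsingleton] at hV1
    obtain ⟨a, b, hab⟩ := hna
    exact hab (hfaith (MulEquiv.ext fun v => Subsingleton.elim _ _))
  obtain ⟨l, hl, h3⟩ := exists_good_char (φ := φ) hV hVnt
  -- The second orbit, distinct from that of `l` because `|H|` is odd.
  let l' : DualChar φ := ⟨l.toHom⁻¹⟩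
  have hstab : MulAction.stabilizer H l' = MulAction.stabilizer H l := stabilizer_inv l
  have hbound := index_bound hna hfaith hirr hHodd l hl h3
  let L := {μ : H →* ℂˣ // ∀ h, (μ h : ℂ) ∈ k}
  have : Fintype L := Fintype.ofFinite L
  have hcard := card_le_mul_card_monoFD k l
  have hcard' := card_le_mul_card_monoFD k l'
  rw [hstab] at hcard'
  have hrank : ∀ μ, Module.finrank ℂ (monoFD l μ) = (MulAction.stabilizer H l).index :=
    monoFD_finrank l
  have hrank' : ∀ μ, Module.finrank ℂ (monoFD l' μ) = (MulAction.stabilizer H l).index :=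
    fun μ => by rw [monoFD_finrank, hstab]
  set m := (MulAction.stabilizer H l).index
  set t := (commutator H ⊔ MulAction.stabilizer H l).index
  set B₁ := Finset.univ.image fun μ : L => (monoFD l μ.1).character
  set B₂ := Finset.univ.image fun μ : L => (monoFD l' μ.1).character
  have hfin : (IrrKP (V ⋊[φ] H) k 3).Finite :=
    (Irr_finite (V ⋊[φ] H)).subset fun χ hχ => by
      obtain ⟨U, hU, hχU, -⟩ := hχ
      exact ⟨U, hU, hχU⟩
  set S := hfin.toFinset
  set S₁ := S.filter fun χ => χ 1 = 1
  have hdeg : ∀ χ ∈ S, χ ∉ S₁ → 5 ≤ (χ 1).re := by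
    intro χ hχ hχ1
    obtain ⟨U, hU, rfl, -, hd3⟩ := hfin.mem_toFinset.mp hχ
    have hodd : Odd (Module.finrank ℂ U) := Odd.of_dvd_nat hG (degree_dvd_card U)
    have hne1 : Module.finrank ℂ U ≠ 1 := fun h =>
      hχ1 (Finset.mem_filter.mpr ⟨hχ, by rw [FDRep.char_one, h, Nat.cast_one]⟩)
    rw [FDRep.char_one, Complex.natCast_re]
    have : 5 ≤ Module.finrank ℂ U := by
      obtain ⟨r, hr⟩ := hodd
      by_contra hlt
      have : r = 0 ∨ r = 1 := by omega
      rcases this with rfl | rfl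
      · exact hne1 hr
      · exact hd3 ⟨1, by rw [hr]; norm_num⟩
    exact_mod_cast this
  have hS₁ : S₁.card ≤ Fintype.card L := by
    rw [← Finset.card_univ]
    refine le_trans (Finset.card_le_card ?_) (Finset.card_image_le (s := Finset.univ)
      (f := fun (μ : L) (g : V ⋊[φ] H) => (μ.1 g.right : ℂ)))
    intro χ hχ
    obtain ⟨hχS, hχ1⟩ := Finset.mem_filter.mp hχ
    obtain ⟨U, hU, rfl, hk, -⟩ := hfin.mem_toFinset.mp hχS
    rw [FDRep.char_one, Nat.cast_eq_one] at hχ1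
    obtain ⟨θ, hθ⟩ := exists_linear_of_finrank_one U hχ1
    refine Finset.mem_image.mpr ⟨⟨θ.comp SemidirectProduct.inr, fun h => ?_⟩,
      Finset.mem_univ _, ?_⟩
    · rw [MonoidHom.comp_apply, ← hθ]
      exact hk _
    · funext g
      rw [hθ, linear_trivial_on hna hfaith hirr θ g]
      rfl
  have hB₁ : ∀ χ ∈ B₁, χ ∈ S ∧ χ 1 = m := by
    intro χ hχ
    obtain ⟨μ, -, rfl⟩ := Finset.mem_image.mp hχ
    refine ⟨hfin.mem_toFinset.mpr ⟨monoFD l μ.1, monoFD_simple l μ.1, rfl,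
      monoFD_character_mem hV k hk3 l μ.1 μ.2, by rwa [hrank]⟩, ?_⟩
    rw [FDRep.char_one, hrank]
  have hB₂ : ∀ χ ∈ B₂, χ ∈ S ∧ χ 1 = m := by
    intro χ hχ
    obtain ⟨μ, -, rfl⟩ := Finset.mem_image.mp hχ
    refine ⟨hfin.mem_toFinset.mpr ⟨monoFD l' μ.1, monoFD_simple l' μ.1, rfl,
      monoFD_character_mem hV k hk3 l' μ.1 μ.2, by rwa [hrank']⟩, ?_⟩
    rw [FDRep.char_one, hrank']
  have hdisj : Disjoint B₁ B₂ := by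
    rw [Finset.disjoint_left]
    intro χ hχ1 hχ2
    obtain ⟨μ, -, rfl⟩ := Finset.mem_image.mp hχ1
    obtain ⟨ν, -, hν⟩ := Finset.mem_image.mp hχ2
    have hν : (monoFD l' ν.1).character = (monoFD l μ.1).character := hν
    have e1 := monoFD_detect l l' μ.1 1 (one_smul H l')
    have e2 := monoFD_detect l' l' ν.1 1 (one_smul H l')
    rw [hν, e1, if_neg (inv_notMem_orbit hV hHodd l hl), if_pos (MulAction.mem_orbit_self l'),
      map_one, Units.val_one, mul_one] at e2
    exact Nat.card_pos.ne (Nat.cast_injective (R := ℂ) (by rw [← e2, Nat.cast_zero]))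
  set B := B₁ ∪ B₂
  have hB : ∀ χ ∈ B, χ ∈ S ∧ χ 1 = m := fun χ hχ =>
    (Finset.mem_union.mp hχ).elim (hB₁ χ) (hB₂ χ)
  have hBcard : 2 * Fintype.card L ≤ t * B.card := by
    rw [Finset.card_union_of_disjoint hdisj, mul_add, two_mul]
    exact Nat.add_le_add hcard hcard'
  have hm2 : 2 ≤ m := by omega
  -- Termwise: linear characters contribute `-64`, those in `B` contribute `17 m - 81`, and all
  -- others are nonnegative.
  have hsum : (17 * (m : ℝ) - 81) * B.card - 64 * S₁.card ≤
      ∑ χ ∈ S, (17 * (χ 1).re - 81) := by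
    have hBS : S.filter (· ∈ B) = B := by
      ext χ
      rw [Finset.mem_filter]
      exact ⟨fun h => h.2, fun h => ⟨(hB χ h).1, h⟩⟩
    have hS₁S : S.filter (· ∈ S₁) = S₁ := by
      ext χ
      rw [Finset.mem_filter]
      exact ⟨fun h => h.2, fun h => ⟨(Finset.mem_filter.mp h).1, h⟩⟩
    have e : (17 * (m : ℝ) - 81) * B.card - 64 * S₁.card =
        ∑ χ ∈ S, ((if χ ∈ B then 17 * (m : ℝ) - 81 else 0) - (if χ ∈ S₁ then 64 else 0)) := by
      rw [Finset.sum_sub_distrib, ← Finset.sum_filter, ← Finset.sum_filter, hBS, hS₁S,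
        Finset.sum_const, Finset.sum_const, nsmul_eq_mul, nsmul_eq_mul]
      ring
    rw [e]
    refine Finset.sum_le_sum fun χ hχ => ?_
    by_cases h1 : χ ∈ S₁
    · have hχ1 : χ 1 = 1 := (Finset.mem_filter.mp h1).2
      have hnB : χ ∉ B := by
        intro h
        have := (hB χ h).2
        rw [hχ1] at this
        have : 1 = m := by exact_mod_cast this
        omega
      rw [if_neg hnB, if_pos h1, hχ1]
      norm_num
    · by_cases h2 : χ ∈ B
      · rw [if_pos h2, if_neg h1, (hB χ h2).2, Complex.natCast_re, sub_zero]
      · rw [if_neg h2, if_neg h1]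
        linarith [hdeg χ hχ h1]
  have hnonneg : 0 ≤ ∑ χ ∈ S, (17 * (χ 1).re - 81) := by
    refine le_trans ?_ hsum
    have c1 : (S₁.card : ℝ) ≤ Fintype.card L := by exact_mod_cast hS₁
    have c2 : 2 * (Fintype.card L : ℝ) ≤ t * B.card := by exact_mod_cast hBcard
    have c3 : 81 + 32 * (t : ℝ) ≤ 17 * m := by exact_mod_cast hbound
    have c4 : 32 * (t : ℝ) * B.card ≤ (17 * m - 81) * B.card :=
      mul_le_mul_of_nonneg_right (by linarith) (Nat.cast_nonneg _)
    nlinarith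
  have hne : S.Nonempty :=
    ⟨_, (hB₁ _ (Finset.mem_image_of_mem _
      (Finset.mem_univ (⟨1, fun _ => by simp [k.one_mem]⟩ : L)))).1⟩
  have hpos : (0 : ℝ) < S.card := by exact_mod_cast hne.card_pos
  rw [acdKP, finsum_mem_eq_finite_toFinset_sum _ hfin, Nat.card_coe_set_eq,
    Set.ncard_eq_toFinset_card _ hfin, le_div_iff₀ hpos]
  rw [Finset.sum_sub_distrib, ← Finset.mul_sum, Finset.sum_const, nsmul_eq_mul] at hnonneg
  linarith
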